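/- arXiv:1612.05592 — 4 statements merged into one kernel-verified Lean document; each statement's English description precedes it below -/
import Mathlib

section
/- Let ψ : [0,1] → [0,1] be continuous and suppose that for some natural number p ≥ 1 the p-th iterate satisfies ψᵖ(x) = x for all x ∈ [0,1]. Then ψ(ψ(x)) = x for all x ∈ [0,1]. -/
/-!
A map all of whose points are periodic is injective, so if it is continuous on an interval it is
strictly monotone or strictly antitone. Either way its square is strictly monotone. A periodic point
of a monotone self-map of a linear order is fixed: if `x < f x`, then `x < f x ≤ f (f x) ≤ ⋯`
never returns to `x`, and similarly if `f x < x`. Hence the square is the identity.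
-/

open Function Set

theorem injective_of_forall_mem_periodicPts {α : Type*} {f : α → α}
    (hf : ∀ x, x ∈ periodicPts f) : Injective f := by
  intro x y hxy
  obtain ⟨m, hm, hx⟩ := hf x
  obtain ⟨n, hn, hy⟩ := hf y
  exact hx.eq_of_apply_eq hy hm hn hxy

theorem isFixedPt_of_monotone_of_mem_periodicPts {α : Type*} [LinearOrder α] {f : α → α} {x : α}
    (hf : Monotone f) (hx : x ∈ periodicPts f) : IsFixedPt f x := by
  obtain ⟨n, hn, hx⟩ := hx
  have iterate_eq : f^[n] x = id^[n] x := by rw [hx.eq, iterate_id, id]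
  exact (Function.Commute.id_right.iterate_pos_eq_iff_map_eq hf strictMono_id hn).mp iterate_eq

theorem mem_periodicPts_restrict_iff {α : Type*} {f : α → α} {s : Set α} (hf : MapsTo f s s)
    (x : s) : x ∈ periodicPts (hf.restrict f s s) ↔ (x : α) ∈ periodicPts f := by
  simp only [mem_periodicPts, IsPeriodicPt, IsFixedPt, Subtype.ext_iff, hf.coe_iterate_restrict]

section ConditionallyCompleteLinearOrder

variable {α : Type*} [ConditionallyCompleteLinearOrder α] [TopologicalSpace α] [OrderTopology α]
  [DenselyOrdered α]

theorem involutive_of_continuous_of_forall_mem_periodicPts {f : α → α} (hf : Continuous f)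
    (hper : ∀ x, x ∈ periodicPts f) : Involutive f := by
  have hinj : Injective f := injective_of_forall_mem_periodicPts hper
  have hmono : StrictMono (f ∘ f) :=
    (hf.strictMono_of_inj hinj).elim (fun h ↦ h.comp h) (fun h ↦ h.comp h)
  intro x
  obtain ⟨n, hn, hx⟩ := hper x
  have hx₂ : x ∈ periodicPts (f ∘ f) := ⟨n, hn, hx.comp (.refl f) hx⟩
  exact isFixedPt_of_monotone_of_mem_periodicPts hmono.monotone hx₂

theorem nathanson_square_general {ψ : α → α} {s : Set α} [s.OrdConnected] (hmap : MapsTo ψ s s)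
    (hcont : ContinuousOn ψ s) (hper : s ⊆ periodicPts ψ) : ∀ x ∈ s, ψ (ψ x) = x := by
  intro x hx
  -- `s` is conditionally complete only once it has a default element, the junk value of `sSup`.
  let : Inhabited s := ⟨⟨x, hx⟩⟩
  have hinv : Involutive (hmap.restrict ψ s s) :=
    involutive_of_continuous_of_forall_mem_periodicPts (hcont.mapsToRestrict hmap)
      fun y ↦ (mem_periodicPts_restrict_iff hmap y).mpr (hper y.2)
  exact congrArg Subtype.val (hinv ⟨x, hx⟩)

end ConditionallyCompleteLinearOrder

/-- Nathanson's theorem: if `ψ : [0,1] → [0,1]` is continuous and `ψᵖ(x) = x` for all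
`x ∈ [0,1]` for some `p ≥ 1`, then `ψ(ψ(x)) = x` on `[0,1]`. -/
theorem nathanson_square (ψ : ℝ → ℝ)
    (hmap : Set.MapsTo ψ (Set.Icc 0 1) (Set.Icc 0 1))
    (hcont : ContinuousOn ψ (Set.Icc 0 1))
    (p : ℕ) (hp : 1 ≤ p)
    (hiter : ∀ x ∈ Set.Icc (0 : ℝ) 1, ψ^[p] x = x) :
    ∀ x ∈ Set.Icc (0 : ℝ) 1, ψ (ψ x) = x :=
  nathanson_square_general hmap hcont fun x hx ↦ ⟨p, hp, hiter x hx⟩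
end

section
/- Let ψ : [0,1] → [0,1] be continuous and suppose that for some odd natural number p ≥ 1 the p-th iterate satisfies ψᵖ(x) = x for all x ∈ [0,1]. Then ψ(x) = x for all x ∈ [0,1]. -/
/-!
A continuous self-map `f` of an interval all of whose points are periodic is injective, hence
strictly monotone or strictly antitone. A monotone map of a linear order has no periodic points
other than its fixed points, since `x < f x` would give `x < f x ≤ f (f x) ≤ ⋯`. If `f` is antitone,
then `f ∘ f` is monotone, so every periodic point has period `2`; a point which also has an odd
period is fixed.
-/

section

open Function Set

section Monotonicity

variable {α : Type*} [LinearOrder α] {f : α → α} {n : ℕ} {x : α}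

theorem isFixedPt_of_monotone_of_isPeriodicPt (hf : Monotone f) (hn : 0 < n)
    (hx : IsPeriodicPt f n x) : IsFixedPt f x := by
  have iterate_eq_id_iterate : f^[n] x = id^[n] x := by rw [iterate_id]; exact hx
  exact ((Commute.id_right (f := f)).iterate_pos_eq_iff_map_eq hf strictMono_id hn).1
    iterate_eq_id_iterate

theorem isPeriodicPt_two_of_antitone_of_isPeriodicPt (hf : Antitone f) (hn : 0 < n)
    (hx : IsPeriodicPt f n x) : IsPeriodicPt f 2 x :=
  isFixedPt_of_monotone_of_isPeriodicPt (f := f^[2]) (hf.comp hf) hn (hx.iterate 2)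

theorem isFixedPt_of_antitone_of_isPeriodicPt_of_odd (hf : Antitone f) (hn : Odd n)
    (hx : IsPeriodicPt f n x) : IsFixedPt f x := by
  have period_gcd : IsPeriodicPt f (Nat.gcd 2 n) x :=
    (isPeriodicPt_two_of_antitone_of_isPeriodicPt hf hn.pos hx).gcd hx
  rwa [hn.coprime_two_left.gcd_eq_one] at period_gcd

end Monotonicity

variable {α : Type*} [ConditionallyCompleteLinearOrder α] [TopologicalSpace α] [OrderTopology α]
  [DenselyOrdered α]

theorem isFixedPt_of_continuous_of_forall_odd_isPeriodicPt {f : α → α} (hf : Continuous f)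
    (hper : ∀ x, ∃ n, Odd n ∧ IsPeriodicPt f n x) (x : α) : IsFixedPt f x := by
  have hinj : Injective f := injective_of_forall_mem_periodicPts fun y ↦
    let ⟨_, hodd, hy⟩ := hper y
    mk_mem_periodicPts hodd.pos hy
  obtain ⟨n, hodd, hx⟩ := hper x
  rcases hf.strictMono_of_inj hinj with hmono | hanti
  · exact isFixedPt_of_monotone_of_isPeriodicPt hmono.monotone hodd.pos hx
  · exact isFixedPt_of_antitone_of_isPeriodicPt_of_odd hanti.antitone hodd hx

theorem nathanson_odd_general {s : Set α} [s.OrdConnected] {ψ : α → α} (hmap : MapsTo ψ s s)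
    (hcont : ContinuousOn ψ s) (hper : ∀ x ∈ s, ∃ p, Odd p ∧ ψ^[p] x = x) :
    ∀ x ∈ s, ψ x = x := by
  intro x hx
  have : Inhabited s := ⟨⟨x, hx⟩⟩
  have restrict_periodic (y : s) : ∃ p, Odd p ∧ IsPeriodicPt (hmap.restrict ψ s s) p y := by
    obtain ⟨p, hodd, hy⟩ := hper y y.2
    exact ⟨p, hodd, Subtype.ext ((hmap.coe_iterate_restrict y p).trans hy)⟩
  exact congrArg Subtype.val (isFixedPt_of_continuous_of_forall_odd_isPeriodicPt
    (hcont.mapsToRestrict hmap) restrict_periodic ⟨x, hx⟩)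

end

/-- Odd-period case of Nathanson's theorem: if `ψ : [0,1] → [0,1]` is continuous and
`ψᵖ(x) = x` on `[0,1]` for some odd `p ≥ 1`, then `ψ(x) = x` on `[0,1]`. -/
theorem nathanson_odd (ψ : ℝ → ℝ)
    (hmap : Set.MapsTo ψ (Set.Icc 0 1) (Set.Icc 0 1))
    (hcont : ContinuousOn ψ (Set.Icc 0 1))
    (p : ℕ) (hp : 1 ≤ p) (hodd : Odd p)
    (hiter : ∀ x ∈ Set.Icc (0 : ℝ) 1, ψ^[p] x = x) :
    ∀ x ∈ Set.Icc (0 : ℝ) 1, ψ x = x :=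
  nathanson_odd_general hmap hcont fun x hx ↦ ⟨p, hodd, hiter x hx⟩
end

section
/- Let g : [0,1] → [0,1] be the tent map g(x) = 1 − |1 − 2x|, let g₂ : [0,1] → [0,1] be continuous with g₂(0) = 0 and g₂(1) = 0, and let h : [0,1] → [0,1] be a homeomorphism with h(g(x)) = g₂(h(x)) for all x ∈ [0,1]. Then the set M = { x ∈ [0,1] : g₂ᵏ(x) = 0 for some natural number k } is dense in [0,1]. -/
/-!
Each branch of the tent map doubles distances and maps onto `[0,1]`, so a prescribed point `y` has a
preimage at half the distance from `x` that `y` has from the image of `x`. Iterating, every point of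
`[0,1]` is the `n`-th iterate of a point within `2⁻ⁿ` of `x`: all backward orbits are dense. A
continuous semiconjugacy `h` carries the dense backward orbit of `b` into the backward orbit of
`h b`, and by surjectivity `b` can be chosen with `h b = 0`.
-/

open Set

section BackwardOrbit

variable {X Y : Type*}

/-- The backward orbit of `c` under `f` within `s`: the points of `s` that some iterate of `f`
(possibly the zeroth) maps to `c`. Only the starting point is required to lie in `s`. -/
def backwardOrbit (f : X → X) (s : Set X) (c : X) : Set X :=
  {x ∈ s | ∃ k : ℕ, f^[k] x = c}

lemma eqOn_comp_iterate {f : X → X} {g : Y → Y} {h : X → Y} {s : Set X} (hf : MapsTo f s s)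
    (hconj : EqOn (h ∘ f) (g ∘ h) s) (k : ℕ) : EqOn (h ∘ f^[k]) (g^[k] ∘ h) s := by
  induction k with
  | zero => exact eqOn_refl _ _
  | succ k ih =>
    intro x hx
    calc h (f^[k] (f x)) = g^[k] (h (f x)) := ih (hf hx)
      _ = g^[k] (g (h x)) := congrArg g^[k] (hconj hx)

lemma mapsTo_backwardOrbit {f : X → X} {g : Y → Y} {h : X → Y} {s : Set X} (hf : MapsTo f s s)
    (hconj : EqOn (h ∘ f) (g ∘ h) s) (b : X) :
    MapsTo h (backwardOrbit f s b) (backwardOrbit g (h '' s) (h b)) := by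
  rintro x ⟨hx, k, rfl⟩
  exact ⟨mem_image_of_mem h hx, k, (eqOn_comp_iterate hf hconj k hx).symm⟩

lemma image_subset_closure_backwardOrbit [TopologicalSpace X] [TopologicalSpace Y]
    {f : X → X} {g : Y → Y} {h : X → Y} {s : Set X} {b : X} (hf : MapsTo f s s)
    (hh : ContinuousOn h s) (hconj : EqOn (h ∘ f) (g ∘ h) s)
    (hdense : s ⊆ closure (backwardOrbit f s b)) :
    h '' s ⊆ closure (backwardOrbit g (h '' s) (h b)) := by
  rintro _ ⟨x, hx, rfl⟩
  have hcont : ContinuousWithinAt h (backwardOrbit f s b) x := (hh x hx).mono (sep_subset _ _)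
  exact hcont.mem_closure (hdense hx) (mapsTo_backwardOrbit hf hconj b)

end BackwardOrbit

section ContractingPreimages

open scoped NNReal

variable {X : Type*} [PseudoMetricSpace X] {f : X → X} {s : Set X} {K : ℝ≥0}

lemma exists_iterate_eq_dist_le (hf : MapsTo f s s)
    (hpre : ∀ x ∈ s, ∀ y ∈ s, ∃ z ∈ s, f z = y ∧ dist x z ≤ K * dist (f x) y)
    (n : ℕ) {x y : X} (hx : x ∈ s) (hy : y ∈ s) :
    ∃ z ∈ s, f^[n] z = y ∧ dist x z ≤ K ^ n * dist (f^[n] x) y := by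
  induction n generalizing x with
  | zero => exact ⟨y, hy, rfl, by simp⟩
  | succ n ih =>
    obtain ⟨w, hw, hwy, hdist_w⟩ := ih (hf hx)
    obtain ⟨z, hz, rfl, hdist_z⟩ := hpre x hx w hw
    refine ⟨z, hz, hwy, ?_⟩
    calc dist x z ≤ K * dist (f x) (f z) := hdist_z
      _ ≤ K * (K ^ n * dist (f^[n] (f x)) y) := by gcongr
      _ = K ^ (n + 1) * dist (f^[n + 1] x) y := by
        rw [pow_succ', mul_assoc, Function.iterate_succ_apply]

lemma subset_closure_backwardOrbit (hs : Bornology.IsBounded s) (hf : MapsTo f s s) (hK : K < 1)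
    (hpre : ∀ x ∈ s, ∀ y ∈ s, ∃ z ∈ s, f z = y ∧ dist x z ≤ K * dist (f x) y)
    {c : X} (hc : c ∈ s) : s ⊆ closure (backwardOrbit f s c) := by
  intro x hx
  rw [Metric.mem_closure_iff]
  intro ε hε
  have hlim : Filter.Tendsto (fun n : ℕ ↦ (K : ℝ) ^ n * Metric.diam s) Filter.atTop (nhds 0) := by
    simpa only [zero_mul] using
      (tendsto_pow_atTop_nhds_zero_of_lt_one K.coe_nonneg hK).mul_const (Metric.diam s)
  obtain ⟨n, hn⟩ := (hlim.eventually_lt_const hε).exists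
  obtain ⟨z, hz, hzc, hdist⟩ := exists_iterate_eq_dist_le hf hpre n hx hc
  refine ⟨z, ⟨hz, n, hzc⟩, ?_⟩
  calc dist x z ≤ K ^ n * dist (f^[n] x) c := hdist
    _ ≤ K ^ n * Metric.diam s := by
      gcongr
      exact Metric.dist_le_diam_of_mem hs (hf.iterate n hx) hc
    _ < ε := hn

end ContractingPreimages

/-- The tent map, extended by its formula to all of `ℝ` so that its iterates need no subtypes. -/
def tentMap (x : ℝ) : ℝ := 1 - |1 - 2 * x|

lemma tentMap_of_le_half {x : ℝ} (hx : x ≤ 1 / 2) : tentMap x = 2 * x := by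
  rw [tentMap, abs_of_nonneg (by linarith)]
  ring

lemma tentMap_one_sub (x : ℝ) : tentMap (1 - x) = tentMap x := by
  rw [tentMap, tentMap, ← abs_neg]
  ring_nf

lemma mapsTo_tentMap_Icc : MapsTo tentMap (Icc 0 1) (Icc 0 1) := by
  rintro x ⟨hx0, hx1⟩
  have habs : |1 - 2 * x| ≤ 1 := abs_le.2 ⟨by linarith, by linarith⟩
  exact ⟨sub_nonneg.2 habs, sub_le_self 1 (abs_nonneg _)⟩

lemma exists_tentMap_eq_dist_eq (x : ℝ) {y : ℝ} (hy : y ∈ Icc (0 : ℝ) 1) :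
    ∃ z ∈ Icc (0 : ℝ) 1, tentMap z = y ∧ dist x z = 1 / 2 * dist (tentMap x) y := by
  wlog hx : x ≤ 1 / 2 generalizing x
  · obtain ⟨z, hz, hzy, hdist⟩ := this (1 - x) (by linarith)
    refine ⟨1 - z, Icc.one_sub_mem hz, (tentMap_one_sub z).trans hzy, ?_⟩
    rw [← tentMap_one_sub x, ← hdist, ← dist_sub_left 1 x, sub_sub_cancel]
  have hy_half : y / 2 ≤ 1 / 2 := by linarith [hy.2]
  refine ⟨y / 2, ⟨by linarith [hy.1], by linarith⟩, ?_, ?_⟩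
  · rw [tentMap_of_le_half hy_half, mul_div_cancel₀ y two_ne_zero]
  · calc dist x (y / 2) = |1 / 2 * (2 * x - y)| := by rw [Real.dist_eq]; ring_nf
      _ = 1 / 2 * dist (tentMap x) y := by
        rw [abs_mul, abs_of_pos one_half_pos, tentMap_of_le_half hx, Real.dist_eq]

lemma Icc_subset_closure_backwardOrbit_tentMap {c : ℝ} (hc : c ∈ Icc (0 : ℝ) 1) :
    Icc 0 1 ⊆ closure (backwardOrbit tentMap (Icc 0 1) c) := by
  refine subset_closure_backwardOrbit (K := 1 / 2) (Metric.isBounded_Icc 0 1) mapsTo_tentMap_Icc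
    (NNReal.half_lt_self one_ne_zero) (fun x _ y hy ↦ ?_) hc
  obtain ⟨z, hz, hzy, hdist⟩ := exists_tentMap_eq_dist_eq x hy
  exact ⟨z, hz, hzy, by simpa using hdist.le⟩

theorem ulam_density_criterion_general {Y : Type*} [TopologicalSpace Y] {g : Y → Y} {h : ℝ → Y}
    (hh : ContinuousOn h (Icc 0 1)) (hconj : EqOn (h ∘ tentMap) (g ∘ h) (Icc 0 1))
    {c : Y} (hc : c ∈ h '' Icc 0 1) :
    h '' Icc 0 1 ⊆ closure (backwardOrbit g (h '' Icc 0 1) c) := by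
  obtain ⟨b, hb, rfl⟩ := hc
  exact image_subset_closure_backwardOrbit mapsTo_tentMap_Icc hh hconj
    (Icc_subset_closure_backwardOrbit_tentMap hb)

/-- Necessity in Ulam's criterion: if `h` is a homeomorphism of `[0,1]` conjugating the
tent map `g` to a continuous map `g₂ : [0,1] → [0,1]` with `g₂(0) = 0` and `g₂(1) = 0`,
then the set of points of `[0,1]` eventually mapped to `0` by `g₂` is dense in `[0,1]`. -/
theorem ulam_density_criterion (g g₂ h : ℝ → ℝ)
    (hg : ∀ x, g x = 1 - |1 - 2 * x|)
    (hg₂map : Set.MapsTo g₂ (Set.Icc 0 1) (Set.Icc 0 1))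
    (hg₂cont : ContinuousOn g₂ (Set.Icc 0 1))
    (hg₂0 : g₂ 0 = 0) (hg₂1 : g₂ 1 = 0)
    (hhcont : ContinuousOn h (Set.Icc 0 1))
    (hhbij : Set.BijOn h (Set.Icc 0 1) (Set.Icc 0 1))
    (hconj : ∀ x ∈ Set.Icc (0 : ℝ) 1, h (g x) = g₂ (h x)) :
    Set.Icc (0 : ℝ) 1 ⊆
      closure {x ∈ Set.Icc (0 : ℝ) 1 | ∃ k : ℕ, g₂^[k] x = 0} := by
  obtain rfl : g = tentMap := funext hg
  have hzero : (0 : ℝ) ∈ h '' Set.Icc 0 1 := hhbij.surjOn (Set.left_mem_Icc.2 zero_le_one)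
  simpa only [hhbij.image_eq, backwardOrbit] using ulam_density_criterion_general hhcont hconj hzero
end

section
/- Let f : [0,1] → [0,1] be the logistic map f(x) = 4x(1−x). Then for Lebesgue-almost every x₀ ∈ [0,1] the orbit of x₀ is equidistributed with respect to the arcsine distribution: for all real a, b with 0 ≤ a ≤ b ≤ 1, the proportion (1/N)·#{ i : 0 ≤ i < N and fⁱ(x₀) ∈ [a,b] } tends to (2/π)·(arcsin(√b) − arcsin(√a)) as N → ∞. -/
open MeasureTheory

open Filter Topology AddCircle

open scoped ENNReal BoundedContinuousFunction

/-! The circle map `t ↦ sin² (π t)` intertwines doubling with the logistic map and pushes Lebesgue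
measure forward to the arcsine distribution, so it is enough that `2 ^ i t` equidistributes modulo
`1` for almost every `t`. By Weyl's criterion this amounts to `1/N ∑_{i < N} e(n 2 ^ i t) → 0` for
each `n ≠ 0`. The characters involved are orthonormal, so the `N`-th mean has squared `L²` norm
`1/N`; this is summable along `N = m²`, which gives almost everywhere convergence along squares,
and boundedness of the characters fills the gaps between consecutive squares. -/

section CesaroMean

variable {E : Type*} [NormedAddCommGroup E] [NormedSpace ℝ E]

/-- The mean `1/N ∑_{i < N} u i` of the first `N` terms of a sequence, equal to `0` for `N = 0`. -/
noncomputable def cesaroMean (u : ℕ → E) (N : ℕ) : E :=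
  (N : ℝ)⁻¹ • ∑ i ∈ Finset.range N, u i

theorem cesaroMean_add (u v : ℕ → E) (N : ℕ) :
    cesaroMean (fun i => u i + v i) N = cesaroMean u N + cesaroMean v N := by
  simp only [cesaroMean, Finset.sum_add_distrib, smul_add]

theorem cesaroMean_sub (u v : ℕ → E) (N : ℕ) :
    cesaroMean (fun i => u i - v i) N = cesaroMean u N - cesaroMean v N := by
  simp only [cesaroMean, Finset.sum_sub_distrib, smul_sub]

theorem cesaroMean_smul {𝕜 : Type*} [DistribSMul 𝕜 E] [SMulCommClass 𝕜 ℝ E]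
    (c : 𝕜) (u : ℕ → E) (N : ℕ) :
    cesaroMean (fun i => c • u i) N = c • cesaroMean u N := by
  simp only [cesaroMean, ← Finset.smul_sum, smul_comm c]

theorem cesaroMean_const {N : ℕ} (hN : N ≠ 0) (c : E) : cesaroMean (fun _ => c) N = c := by
  rw [cesaroMean, Finset.sum_const, Finset.card_range, ← Nat.cast_smul_eq_nsmul ℝ,
    inv_smul_smul₀ (Nat.cast_ne_zero.2 hN)]

theorem norm_cesaroMean_le {u : ℕ → E} {C : ℝ} (hu : ∀ i, ‖u i‖ ≤ C) (N : ℕ) :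
    ‖cesaroMean u N‖ ≤ C := by
  have hC : 0 ≤ C := (norm_nonneg _).trans (hu 0)
  have hsum : ‖∑ i ∈ Finset.range N, u i‖ ≤ N * C := by
    simpa using norm_sum_le_of_le (Finset.range N) fun i _ => hu i
  rw [cesaroMean, norm_smul, norm_inv, Real.norm_natCast]
  exact inv_mul_le_of_le_mul₀ N.cast_nonneg hC hsum

theorem tendsto_nat_sqrt_atTop : Tendsto Nat.sqrt atTop atTop :=
  tendsto_atTop.2 fun b =>
    (eventually_ge_atTop (b * b)).mono fun _ h => Nat.le_sqrt.2 h

theorem norm_cesaroMean_le_sqrt {u : ℕ → E} {C : ℝ} (hu : ∀ i, ‖u i‖ ≤ C) {N : ℕ} (hN : N ≠ 0) :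
    ‖cesaroMean u N‖ ≤ ‖cesaroMean u (N.sqrt ^ 2)‖ + 2 * C / N.sqrt := by
  set m := N.sqrt
  have hm : (0 : ℝ) < m := by exact_mod_cast Nat.sqrt_pos.2 (Nat.pos_of_ne_zero hN)
  have hC : 0 ≤ C := (norm_nonneg _).trans (hu 0)
  obtain ⟨k, hk⟩ := Nat.exists_eq_add_of_le (Nat.sqrt_le' N)
  have hk_le : (k : ℝ) ≤ 2 * m := by
    have hN_le : N ≤ m * m + m + m := Nat.sqrt_le_add N
    exact_mod_cast (by nlinarith : k ≤ 2 * m)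
  have htail : ‖∑ i ∈ Finset.range k, u (m ^ 2 + i)‖ ≤ 2 * m * C :=
    calc ‖∑ i ∈ Finset.range k, u (m ^ 2 + i)‖ ≤ k * C := by
          simpa using norm_sum_le_of_le (Finset.range k) fun i _ => hu (m ^ 2 + i)
      _ ≤ 2 * m * C := by gcongr
  have hsq_le : (m : ℝ) ^ 2 ≤ N := by exact_mod_cast Nat.sqrt_le' N
  calc ‖cesaroMean u N‖ = (N : ℝ)⁻¹ * ‖∑ i ∈ Finset.range (m ^ 2 + k), u i‖ := by
        rw [cesaroMean, norm_smul, norm_inv, Real.norm_natCast, ← hk]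
    _ ≤ ((m : ℝ) ^ 2)⁻¹ * (‖∑ i ∈ Finset.range (m ^ 2), u i‖ + 2 * m * C) := by
        rw [Finset.sum_range_add]
        gcongr
        exact (norm_add_le _ _).trans (by gcongr)
    _ = ‖cesaroMean u (m ^ 2)‖ + 2 * C / m := by
        rw [cesaroMean, norm_smul, norm_inv, Real.norm_natCast, Nat.cast_pow]
        field_simp

theorem tendsto_cesaroMean_zero_of_sq {u : ℕ → E} {C : ℝ} (hu : ∀ i, ‖u i‖ ≤ C)
    (h : Tendsto (fun m => cesaroMean u (m ^ 2)) atTop (𝓝 0)) :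
    Tendsto (cesaroMean u) atTop (𝓝 0) := by
  have hbound : Tendsto (fun m : ℕ => ‖cesaroMean u (m ^ 2)‖ + 2 * C / m) atTop (𝓝 0) := by
    simpa using h.norm.add (tendsto_const_div_atTop_nhds_zero_nat (2 * C))
  exact squeeze_zero_norm' ((eventually_ne_atTop 0).mono fun _ => norm_cesaroMean_le_sqrt hu)
    (hbound.comp tendsto_nat_sqrt_atTop)

theorem norm_sq_cesaroMean_of_orthonormal {𝕜 : Type*} [RCLike 𝕜] [InnerProductSpace 𝕜 E]
    {v : ℕ → E} (hv : Orthonormal 𝕜 v) (N : ℕ) : ‖cesaroMean v N‖ ^ 2 = (N : ℝ)⁻¹ := by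
  have hsum : ‖∑ i ∈ Finset.range N, v i‖ ^ 2 = N := by
    have := hv.inner_sum 1 1 (Finset.range N)
    simp only [Pi.one_apply, one_smul, map_one, mul_one, Finset.sum_const, Finset.card_range,
      nsmul_eq_mul, inner_self_eq_norm_sq_to_K] at this
    exact_mod_cast this
  rw [cesaroMean, norm_smul, mul_pow, hsum, norm_inv, Real.norm_natCast]
  rcases eq_or_ne N 0 with rfl | hN
  · simp
  · field_simp

end CesaroMean

section AlmostEverywhere

variable {Ω E : Type*} [MeasurableSpace Ω] {μ : Measure Ω} [NormedAddCommGroup E]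

theorem ae_tendsto_zero_of_tsum_lintegral_ne_top {f : ℕ → Ω → ℝ≥0∞}
    (hf : ∀ m, AEMeasurable (f m) μ) (h : ∑' m, ∫⁻ ω, f m ω ∂μ ≠ ∞) :
    ∀ᵐ ω ∂μ, Tendsto (f · ω) atTop (𝓝 0) := by
  rw [← lintegral_tsum hf] at h
  filter_upwards [ae_lt_top' (AEMeasurable.tsum hf) h] with ω hω
  exact ENNReal.tendsto_atTop_zero_of_tsum_ne_top hω.ne

theorem ae_tendsto_zero_of_summable_norm_sq {f : ℕ → Lp E 2 μ}
    (h : Summable fun m => ‖f m‖ ^ 2) : ∀ᵐ ω ∂μ, Tendsto (f · ω) atTop (𝓝 0) := by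
  have hint (m : ℕ) : ∫⁻ ω, ‖f m ω‖ₑ ^ 2 ∂μ = ENNReal.ofReal (‖f m‖ ^ 2) := by
    have := eLpNorm_nnreal_pow_eq_lintegral (f := f m) (μ := μ) (p := 2) two_ne_zero
    simp only [NNReal.coe_ofNat, ENNReal.rpow_ofNat, ENNReal.coe_ofNat] at this
    rw [← this, ← Lp.enorm_def, ← ofReal_norm, ENNReal.ofReal_pow (norm_nonneg _)]
  have hfin : ∑' m, ∫⁻ ω, ‖f m ω‖ₑ ^ 2 ∂μ ≠ ∞ := by
    simpa only [hint] using h.tsum_ofReal_ne_top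
  filter_upwards [ae_tendsto_zero_of_tsum_lintegral_ne_top
    (fun m => (Lp.aestronglyMeasurable (f m)).enorm.pow_const 2) hfin] with ω hω
  rw [tendsto_zero_iff_enorm_tendsto_zero]
  have hroot := hω.ennrpow_const (2 : ℝ)⁻¹
  rw [ENNReal.zero_rpow_of_pos (by positivity)] at hroot
  refine hroot.congr fun m => ?_
  rw [← ENNReal.rpow_ofNat, ENNReal.rpow_rpow_inv two_ne_zero]

theorem ae_tendsto_cesaroMean_zero_of_orthonormal {𝕜 : Type*} [RCLike 𝕜] [InnerProductSpace 𝕜 E]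
    [NormedSpace ℝ E] {v : ℕ → Lp E 2 μ} (hv : Orthonormal 𝕜 v) {C : ℝ}
    (hC : ∀ i, ∀ᵐ ω ∂μ, ‖v i ω‖ ≤ C) :
    ∀ᵐ ω ∂μ, Tendsto (cesaroMean fun i => v i ω) atTop (𝓝 0) := by
  have hsq : ∀ᵐ ω ∂μ, Tendsto (fun m => cesaroMean v (m ^ 2) ω) atTop (𝓝 0) := by
    refine ae_tendsto_zero_of_summable_norm_sq ?_
    simpa only [norm_sq_cesaroMean_of_orthonormal hv, Nat.cast_pow]
      using Real.summable_nat_pow_inv.2 one_lt_two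
  have hcoe : ∀ᵐ ω ∂μ, ∀ N, cesaroMean v N ω = cesaroMean (fun i => v i ω) N := by
    refine ae_all_iff.2 fun N => ?_
    filter_upwards [Lp.coeFn_smul (N : ℝ)⁻¹ (∑ i ∈ Finset.range N, v i),
      Lp.coeFn_fun_finsetSum (Finset.range N) v] with ω hsmul hsum
    rw [cesaroMean, hsmul, Pi.smul_apply, hsum, cesaroMean]
  filter_upwards [hsq, hcoe, ae_all_iff.2 hC] with ω hω hcoeω hCω
  exact tendsto_cesaroMean_zero_of_sq hCω (by simpa only [hcoeω] using hω)

end AlmostEverywhere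

section Equidistribution

variable {X Y : Type*} [MeasurableSpace X]

/-- The uniform probability measure on the first `N + 1` terms of a sequence, counted with
multiplicity; the shift avoids an empty average. -/
noncomputable def empiricalMeasure (x : ℕ → X) (N : ℕ) : ProbabilityMeasure X :=
  ⟨((N + 1 : ℕ) : ℝ≥0∞)⁻¹ • ∑ i ∈ Finset.range (N + 1), Measure.dirac (x i), ⟨by
    simpa using ENNReal.inv_mul_cancel (by simp) (by finiteness)⟩⟩

theorem toReal_empiricalMeasure_apply (x : ℕ → X) (N : ℕ) {s : Set X} (hs : MeasurableSet s)
    [DecidablePred (· ∈ s)] :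
    ((empiricalMeasure x N : Measure X) s).toReal =
      ((Finset.range (N + 1)).filter (x · ∈ s)).card / ((N + 1 : ℕ) : ℝ) := by
  simp only [empiricalMeasure, ProbabilityMeasure.coe_mk, Measure.smul_apply,
    Measure.finsetSum_apply, Measure.dirac_apply' _ hs, Set.indicator_apply, Pi.one_apply,
    Finset.sum_boole, smul_eq_mul, ENNReal.toReal_mul, ENNReal.toReal_inv, ENNReal.toReal_natCast]
  exact inv_mul_eq_div _ _

variable [TopologicalSpace X] [TopologicalSpace Y] [MeasurableSpace Y]

theorem integral_empiricalMeasure [OpensMeasurableSpace X] (x : ℕ → X) (N : ℕ) (F : X →ᵇ ℂ) :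
    ∫ t, F t ∂(empiricalMeasure x N : Measure X) = cesaroMean (fun i => F (x i)) (N + 1) := by
  have hdirac (i : ℕ) : ∫ t, F t ∂Measure.dirac (x i) = F (x i) :=
    integral_dirac' _ _ F.continuous.stronglyMeasurable
  rw [empiricalMeasure, ProbabilityMeasure.coe_mk, integral_smul_measure,
    integral_finsetSum_measure fun i _ => F.integrable _, ENNReal.toReal_inv,
    ENNReal.toReal_natCast, cesaroMean]
  simp only [hdirac]

/-- A sequence `x` is equidistributed with respect to `μ` if the averages of every bounded
continuous function along `x` converge to its integral. Complex test functions are used so that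
characters are among them. -/
def IsEquidistributed (x : ℕ → X) (μ : Measure X) : Prop :=
  ∀ F : X →ᵇ ℂ, Tendsto (cesaroMean fun i => F (x i)) atTop (𝓝 (∫ t, F t ∂μ))

theorem IsEquidistributed.map [OpensMeasurableSpace X] [BorelSpace Y] {x : ℕ → X} {μ : Measure X}
    (h : IsEquidistributed x μ) {g : X → Y} (hg : Continuous g) :
    IsEquidistributed (fun i => g (x i)) (μ.map g) := by
  intro F
  rw [integral_map hg.measurable.aemeasurable F.continuous.aestronglyMeasurable]
  exact h (F.compContinuous ⟨g, hg⟩)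

theorem IsEquidistributed.tendsto_empiricalMeasure [OpensMeasurableSpace X] {x : ℕ → X}
    {μ : ProbabilityMeasure X} (h : IsEquidistributed x μ) :
    Tendsto (empiricalMeasure x) atTop (𝓝 μ) := by
  rw [ProbabilityMeasure.tendsto_iff_forall_integral_rclike_tendsto ℂ]
  intro F
  simpa only [integral_empiricalMeasure] using (tendsto_add_atTop_iff_nat 1).2 (h F)

theorem IsEquidistributed.tendsto_card_div [OpensMeasurableSpace X] [HasOuterApproxClosed X]
    {x : ℕ → X} {μ : Measure X} [IsProbabilityMeasure μ] (h : IsEquidistributed x μ)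
    {s : Set X} (hs : MeasurableSet s) (hfr : μ (frontier s) = 0) [DecidablePred (· ∈ s)] :
    Tendsto (fun N : ℕ => ((Finset.range N).filter (x · ∈ s)).card / (N : ℝ)) atTop
      (𝓝 (μ.real s)) := by
  have hlim : Tendsto (empiricalMeasure x) atTop (𝓝 ⟨μ, inferInstance⟩) :=
    IsEquidistributed.tendsto_empiricalMeasure h
  have hmeas := (ENNReal.tendsto_toReal (measure_ne_top μ s)).comp
    (ProbabilityMeasure.tendsto_measure_of_null_frontier_of_tendsto' hlim hfr)
  rw [← tendsto_add_atTop_iff_nat 1]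
  exact hmeas.congr fun N => toReal_empiricalMeasure_apply x N hs

section Compact

variable [CompactSpace X] [OpensMeasurableSpace X]

theorem integrable_continuousMap (F : C(X, ℂ)) (μ : Measure X) [IsFiniteMeasure μ] :
    Integrable F μ :=
  (BoundedContinuousFunction.mkOfCompact F).integrable μ

/-- The continuous functions on a compact space whose averages along `x` converge to their
`μ`-integral. -/
def equidistributionSubmodule (x : ℕ → X) (μ : Measure X) [IsFiniteMeasure μ] :
    Submodule ℂ C(X, ℂ) where
  carrier := {F | Tendsto (cesaroMean fun i => F (x i)) atTop (𝓝 (∫ t, F t ∂μ))}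
  zero_mem' := by
    simp only [Set.mem_ofPred_eq, ContinuousMap.zero_apply, integral_zero]
    exact tendsto_const_nhds.congr fun N => by simp [cesaroMean]
  add_mem' {F G} hF hG := by
    simp only [Set.mem_ofPred_eq, ContinuousMap.add_apply,
      integral_add (integrable_continuousMap F μ) (integrable_continuousMap G μ)]
    exact (hF.add hG).congr fun N => (cesaroMean_add _ _ N).symm
  smul_mem' c F hF := by
    simp only [Set.mem_ofPred_eq, ContinuousMap.smul_apply, integral_smul]
    exact (hF.const_smul c).congr fun N => (cesaroMean_smul c _ N).symm

theorem isClosed_equidistributionSubmodule (x : ℕ → X) (μ : Measure X) [IsFiniteMeasure μ] :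
    IsClosed (equidistributionSubmodule x μ : Set C(X, ℂ)) := by
  have hlip (N : ℕ) : LipschitzWith 1 fun F : C(X, ℂ) => cesaroMean (fun i => F (x i)) N := by
    refine .of_dist_le_mul fun F G => ?_
    rw [NNReal.coe_one, one_mul, dist_eq_norm, dist_eq_norm, ← cesaroMean_sub]
    exact norm_cesaroMean_le (fun i => (F - G).norm_coe_le_norm (x i)) N
  have hcont : Continuous fun F : C(X, ℂ) => ∫ t, F t ∂μ := by
    refine (LipschitzWith.of_dist_le_mul (K := ⟨μ.real Set.univ, measureReal_nonneg⟩)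
      fun F G => ?_).continuous
    rw [dist_eq_norm, dist_eq_norm, ← integral_sub (integrable_continuousMap F μ)
      (integrable_continuousMap G μ)]
    exact (BoundedContinuousFunction.mkOfCompact (F - G)).norm_integral_le_mul_norm μ
  exact (LipschitzWith.uniformEquicontinuous _ 1 hlip).equicontinuous.isClosed_setOfPred_tendsto
    hcont

theorem isEquidistributed_of_span_topologicalClosure_eq_top {x : ℕ → X} {μ : Measure X}
    [IsFiniteMeasure μ] {S : Set C(X, ℂ)} (hS : (Submodule.span ℂ S).topologicalClosure = ⊤)
    (h : ∀ F ∈ S, Tendsto (cesaroMean fun i => F (x i)) atTop (𝓝 (∫ t, F t ∂μ))) :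
    IsEquidistributed x μ := by
  intro F
  have hspan : Submodule.span ℂ S ≤ equidistributionSubmodule x μ := Submodule.span_le.2 h
  have hle := Submodule.topologicalClosure_minimal _ hspan (isClosed_equidistributionSubmodule x μ)
  exact hle (hS ▸ Submodule.mem_top : F.toContinuousMap ∈ _)

end Compact

end Equidistribution

section Weyl

variable {T : ℝ} [Fact (0 < T)]

theorem integral_fourier_eq_ite (n : ℤ) :
    ∫ t : AddCircle T, fourier n t ∂haarAddCircle = if n = 0 then 1 else 0 := by
  have := congrFun (fourierCoeff_fourier (T := T) n) 0
  simpa [fourierCoeff, Pi.single_apply, eq_comm] using this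

theorem isEquidistributed_haarAddCircle_of_fourier {x : ℕ → AddCircle T}
    (h : ∀ n ≠ 0, Tendsto (cesaroMean fun i => fourier n (x i)) atTop (𝓝 0)) :
    IsEquidistributed x haarAddCircle := by
  refine isEquidistributed_of_span_topologicalClosure_eq_top span_fourier_closure_eq_top ?_
  rintro _ ⟨n, rfl⟩
  rw [integral_fourier_eq_ite]
  split_ifs with hn
  · subst hn
    refine tendsto_const_nhds.congr' ?_
    filter_upwards [eventually_ne_atTop 0] with N hN
    simp only [fourier_zero, cesaroMean_const hN]
  · exact h n hn

theorem ae_isEquidistributed_zsmul {k : ℕ → ℤ} (hk : Function.Injective k) :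
    ∀ᵐ t : AddCircle T ∂haarAddCircle, IsEquidistributed (fun i => k i • t) haarAddCircle := by
  have hmean (n : ℤ) (hn : n ≠ 0) : ∀ᵐ t : AddCircle T ∂haarAddCircle,
      Tendsto (cesaroMean fun i => fourier n (k i • t)) atTop (𝓝 0) := by
    have horth : Orthonormal ℂ fun i => fourierLp (T := T) 2 (n * k i) :=
      orthonormal_fourier.comp _ ((mul_right_injective₀ hn).comp hk)
    have hcoe : ∀ᵐ t : AddCircle T ∂haarAddCircle, ∀ i,
        fourierLp 2 (n * k i) t = fourier n (k i • t) := by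
      refine ae_all_iff.2 fun i => ?_
      filter_upwards [coeFn_fourierLp 2 (n * k i)] with t ht
      rw [ht, fourier_apply, fourier_apply, mul_smul]
    have hbound (i : ℕ) : ∀ᵐ t : AddCircle T ∂haarAddCircle, ‖fourierLp 2 (n * k i) t‖ ≤ 1 := by
      filter_upwards [hcoe] with t ht
      rw [ht, fourier_apply, Circle.norm_coe]
    filter_upwards [ae_tendsto_cesaroMean_zero_of_orthonormal horth hbound, hcoe] with t ht hcoe_t
    simpa only [hcoe_t] using ht
  filter_upwards [ae_all_iff.2 fun n => ae_all_iff.2 (hmean n)] with t ht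
  exact isEquidistributed_haarAddCircle_of_fourier ht

end Weyl

section Arcsine

open Real

/-- The distribution function `h(x) = (2/π) arcsin √x` of the arcsine distribution on `[0, 1]`,
which conjugates the logistic map to the tent map. -/
noncomputable def arcsineCDF (x : ℝ) : ℝ := 2 / π * arcsin √x

/-- The map `t ↦ sin² (π t)` from the circle `ℝ / ℤ` onto `[0, 1]`; the norm `‖t‖` is the distance
from `t` to the nearest integer, see `sinSq_coe`. -/
noncomputable def sinSq (t : UnitAddCircle) : ℝ := sin (π * ‖t‖) ^ 2

/-- The arcsine distribution on `[0, 1]`, as a measure on `ℝ`. -/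
noncomputable def arcsineMeasure : Measure ℝ := Measure.map sinSq haarAddCircle

theorem sinSq_coe (t : ℝ) : sinSq t = sin (π * t) ^ 2 := by
  have habs (y : ℝ) : sin |y| ^ 2 = sin y ^ 2 := by
    rcases abs_choice y with h | h <;> simp [h]
  have hint : π * (t - round t) = π * t - round t * π := by ring
  rw [sinSq, UnitAddCircle.norm_eq, ← abs_of_pos pi_pos, ← abs_mul, habs, abs_of_pos pi_pos, hint,
    sin_sub_int_mul_pi, mul_pow, ← zpow_natCast, zpow_comm]
  simp

theorem continuous_sinSq : Continuous sinSq := by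
  unfold sinSq
  fun_prop

theorem sinSq_mem_Icc (t : UnitAddCircle) : sinSq t ∈ Set.Icc 0 1 :=
  ⟨sq_nonneg _, sin_sq_le_one _⟩

theorem semiconj_sinSq_logistic :
    Function.Semiconj sinSq (2 • ·) fun x => 4 * x * (1 - x) := by
  intro t
  induction t using QuotientAddGroup.induction_on with | H t =>
  have hdouble : π * (2 • t) = 2 * (π * t) := by rw [nsmul_eq_mul, Nat.cast_ofNat]; ring
  change sinSq ((2 • t : ℝ) : UnitAddCircle) = 4 * sinSq t * (1 - sinSq t)
  rw [sinSq_coe, sinSq_coe, hdouble, sin_two_mul, ← cos_sq']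
  ring

theorem logistic_iterate_sinSq (t : UnitAddCircle) (i : ℕ) :
    (fun x : ℝ => 4 * x * (1 - x))^[i] (sinSq t) = sinSq (2 ^ i • t) := by
  rw [← smul_iterate_apply, (semiconj_sinSq_logistic.iterate_right i).eq]

theorem strictMonoOn_arcsineCDF : StrictMonoOn arcsineCDF (Set.Icc 0 1) := by
  intro x hx y hy hxy
  have hsqrt : √x < √y := sqrt_lt_sqrt hx.1 hxy
  have : arcsin √x < arcsin √y :=
    arcsin_lt_arcsin (by linarith [sqrt_nonneg x]) hsqrt (sqrt_le_one.2 hy.2)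
  unfold arcsineCDF
  gcongr

theorem arcsineCDF_sinSq (t : UnitAddCircle) : arcsineCDF (sinSq t) = 2 * ‖t‖ := by
  have hnorm : ‖t‖ ≤ 1 / 2 := by simpa using AddCircle.norm_le_half_period 1 one_ne_zero (x := t)
  have hle : π * ‖t‖ ≤ π / 2 := by nlinarith [pi_pos]
  have hnonneg : 0 ≤ π * ‖t‖ := by positivity
  rw [arcsineCDF, sinSq, sqrt_sq (sin_nonneg_of_nonneg_of_le_pi hnonneg (by linarith)),
    arcsin_sin (by linarith) hle]
  field_simp

theorem arcsineCDF_mem_Icc {x : ℝ} (hx : x ∈ Set.Icc 0 1) : arcsineCDF x ∈ Set.Icc 0 1 := by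
  have h0 : arcsineCDF 0 = 0 := by simp [arcsineCDF]
  have h1 : arcsineCDF 1 = 1 := by simp [arcsineCDF]
  have hmono := strictMonoOn_arcsineCDF.monotoneOn.mapsTo_Icc
  rw [h0, h1] at hmono
  exact hmono hx

theorem sinSq_coe_arcsineCDF_div_two {x : ℝ} (hx : x ∈ Set.Icc 0 1) :
    sinSq ((arcsineCDF x / 2 : ℝ) : UnitAddCircle) = x := by
  have : π * (arcsineCDF x / 2) = arcsin √x := by
    rw [arcsineCDF]
    field_simp
  rw [sinSq_coe, this, sin_arcsin (by linarith [sqrt_nonneg x]) (sqrt_le_one.2 hx.2),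
    sq_sqrt hx.1]

theorem sinSq_preimage_Icc {a b : ℝ} (ha : a ∈ Set.Icc 0 1) (hb : b ∈ Set.Icc 0 1) :
    sinSq ⁻¹' Set.Icc a b =
      Metric.closedBall 0 (arcsineCDF b / 2) \ Metric.ball 0 (arcsineCDF a / 2) := by
  ext t
  have hat := strictMonoOn_arcsineCDF.le_iff_le ha (sinSq_mem_Icc t)
  have htb := strictMonoOn_arcsineCDF.le_iff_le (sinSq_mem_Icc t) hb
  rw [arcsineCDF_sinSq] at hat htb
  simp only [Set.mem_preimage, Set.mem_Icc, ← hat, ← htb, Set.mem_sdiff, mem_closedBall_zero_iff,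
    mem_ball_zero_iff, not_lt]
  constructor <;> rintro ⟨h₁, h₂⟩ <;> constructor <;> linarith

theorem volume_eq_haarAddCircle :
    (volume : Measure UnitAddCircle) = haarAddCircle := by
  rw [AddCircle.volume_eq_smul_haarAddCircle, ENNReal.ofReal_one, one_smul]

instance : IsProbabilityMeasure arcsineMeasure :=
  Measure.isProbabilityMeasure_map continuous_sinSq.measurable.aemeasurable

theorem arcsineMeasure_real_Icc {a b : ℝ} (ha : 0 ≤ a) (hab : a ≤ b) (hb : b ≤ 1) :
    arcsineMeasure.real (Set.Icc a b) = arcsineCDF b - arcsineCDF a := by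
  have ha' : a ∈ Set.Icc 0 1 := ⟨ha, hab.trans hb⟩
  have hb' : b ∈ Set.Icc 0 1 := ⟨ha.trans hab, hb⟩
  have hmono : arcsineCDF a ≤ arcsineCDF b := strictMonoOn_arcsineCDF.monotoneOn ha' hb' hab
  have hsub : Metric.ball (0 : UnitAddCircle) (arcsineCDF a / 2) ⊆
      Metric.closedBall 0 (arcsineCDF b / 2) :=
    Metric.ball_subset_closedBall.trans (Metric.closedBall_subset_closedBall (by linarith))
  have hclosedBall {c : ℝ} (hc : c ∈ Set.Icc 0 1) :
      haarAddCircle.real (Metric.closedBall (0 : UnitAddCircle) (arcsineCDF c / 2)) =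
        arcsineCDF c := by
    rw [← volume_eq_haarAddCircle, Measure.real, AddCircle.volume_closedBall,
      mul_div_cancel₀ _ two_ne_zero, min_eq_right (arcsineCDF_mem_Icc hc).2,
      ENNReal.toReal_ofReal (arcsineCDF_mem_Icc hc).1]
  have hball : haarAddCircle.real (Metric.ball (0 : UnitAddCircle) (arcsineCDF a / 2)) =
      arcsineCDF a := by
    rw [← volume_eq_haarAddCircle, ← measureReal_congr AddCircle.closedBall_ae_eq_ball,
      volume_eq_haarAddCircle, hclosedBall ha']
  rw [arcsineMeasure, map_measureReal_apply continuous_sinSq.measurable measurableSet_Icc,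
    sinSq_preimage_Icc ha' hb', measureReal_sdiff hsub measurableSet_ball, hclosedBall hb', hball]

theorem arcsineMeasure_frontier_Icc {a b : ℝ} (ha : 0 ≤ a) (hab : a ≤ b) (hb : b ≤ 1) :
    arcsineMeasure (frontier (Set.Icc a b)) = 0 := by
  have hsingleton {c : ℝ} (h0 : 0 ≤ c) (h1 : c ≤ 1) : arcsineMeasure {c} = 0 := by
    rw [← measureReal_eq_zero_iff, ← Set.Icc_self, arcsineMeasure_real_Icc h0 le_rfl h1, sub_self]
  rw [frontier_Icc hab]
  exact measure_union_null (hsingleton ha (hab.trans hb)) (hsingleton (ha.trans hab) hb)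

theorem ae_restrict_Icc_of_ae_sinSq {P : ℝ → Prop} (h : ∀ᵐ t, P (sinSq t)) :
    ∀ᵐ x ∂volume.restrict (Set.Icc (0 : ℝ) 1), P x := by
  have hcoe : ∀ᵐ s : ℝ ∂volume.restrict (Set.Ioc (-1 / 2) (-1 / 2 + 1)), P (sinSq s) :=
    (UnitAddCircle.measurePreserving_mk (-1 / 2)).quasiMeasurePreserving.ae h
  rw [ae_restrict_iff' measurableSet_Ioc] at hcoe
  rw [ae_restrict_iff' measurableSet_Icc]
  refine measure_mono_null ?_ (addHaar_image_eq_zero_of_differentiableOn_of_addHaar_eq_zero volume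
    (f := fun s => sin (π * s) ^ 2) (by fun_prop) hcoe)
  intro x hx
  obtain ⟨hx01, hPx⟩ : x ∈ Set.Icc 0 1 ∧ ¬P x := by simpa [and_assoc] using hx
  obtain ⟨h0, h1⟩ := arcsineCDF_mem_Icc hx01
  have himage := sinSq_coe_arcsineCDF_div_two hx01
  refine ⟨arcsineCDF x / 2, fun hP => hPx ?_, (sinSq_coe _).symm.trans himage⟩
  simpa only [himage] using hP ⟨by linarith, by linarith⟩

theorem ae_isEquidistributed_logistic_iterate :
    ∀ᵐ x ∂volume.restrict (Set.Icc (0 : ℝ) 1),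
      IsEquidistributed (fun i => (fun x : ℝ => 4 * x * (1 - x))^[i] x) arcsineMeasure := by
  refine ae_restrict_Icc_of_ae_sinSq ?_
  rw [volume_eq_haarAddCircle]
  have hpow : Function.Injective fun i : ℕ => (2 : ℤ) ^ i := Int.pow_right_injective (by decide)
  filter_upwards [ae_isEquidistributed_zsmul hpow] with t ht
  have horbit : (fun i => (fun x : ℝ => 4 * x * (1 - x))^[i] (sinSq t)) =
      fun i => sinSq ((2 : ℤ) ^ i • t) := by
    funext i
    rw [logistic_iterate_sinSq]
    norm_cast
  exact horbit ▸ ht.map continuous_sinSq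

end Arcsine

/-- For the logistic map `f(x) = 4x(1-x)`, for Lebesgue-almost every `x₀ ∈ [0,1]`
the orbit of `x₀` is equidistributed with respect to the arcsine distribution. -/
theorem logistic_map_arcsine_equidistribution (f : ℝ → ℝ)
    (hf : ∀ x, f x = 4 * x * (1 - x)) :
    ∀ᵐ x₀ ∂(volume.restrict (Set.Icc (0 : ℝ) 1)),
      ∀ a b : ℝ, 0 ≤ a → a ≤ b → b ≤ 1 →
        Filter.Tendsto
          (fun N : ℕ =>
            ((Finset.range N).filter (fun i => f^[i] x₀ ∈ Set.Icc a b)).card / (N : ℝ))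
          Filter.atTop
          (nhds ((2 / Real.pi) *
            (Real.arcsin (Real.sqrt b) - Real.arcsin (Real.sqrt a)))) := by
  obtain rfl : f = fun x => 4 * x * (1 - x) := funext hf
  filter_upwards [ae_isEquidistributed_logistic_iterate] with x₀ hx₀ a b ha hab hb
  have hlim := hx₀.tendsto_card_div measurableSet_Icc (arcsineMeasure_frontier_Icc ha hab hb)
  rwa [arcsineMeasure_real_Icc ha hab hb, arcsineCDF, arcsineCDF, ← mul_sub] at hlim
end
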